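/- Let α ∈ C_loc^log and q ∈ 𝒫^log with 1 < q⁻ ≤ q⁺ < ∞. Then there are constants c₁, c₂ > 0 such that for every double sequence of complex numbers λ = {λ_{v,m}}_{v∈ℕ₀,m∈ℤⁿ} with ‖λ‖_{b̃^{α(·),q(·)}_{q(·),q(·)}} < ∞ one has c₁ ‖λ‖_{b̃^{α(·),q(·)}_{q(·),q(·)}} ≤ ‖ m^{α(·),q(·)}(λ) ‖_∞ ≤ c₂ ‖λ‖_{b̃^{α(·),q(·)}_{q(·),q(·)}}. -/

import Mathlib

/-!
The upper bound is Chebyshev's inequality: at a level `μ` admissible for the Luxemburg norm, the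
average of `(G_P/μ)^{q(·)}` over `P` is at most `1`, so `G_P > 5μ` on less than a quarter of `P`
and `m_P ≤ 5μ` (`upper`).

For the lower bound fix a real `M` above the essential supremum of `m(λ)`, so that `m_Q < M` for
every `Q`. The good part `E_Q = {x ∈ Q : G_Q(x) ≤ M}` then fills at least half of `Q`. On `E_Q` each
single summand is at most `1` after normalisation by `M`, and the local log-Hölder continuity of `α`
and `1/q` makes the summand attached to `Q` essentially constant on `Q`, up to an additive error
`2^{-v_Q}` (`key_real`, `logHolder_cube`). The error covers the range of
tiny summands, where the exponents `q(x)` and `q(y)` give incomparable powers, and it is harmless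
because it is summable over generations. The integral of the summand over `Q` can therefore be replaced by its integral over
`E_Q` (`cube_estimate`). Restricted to the sets `E_Q`, the sum is bounded pointwise by its tail from
the first generation at which the point is good, hence by `1` (`sum_good_le_one`). Integrating
over `P` yields a bounded average of `(G_P/M)^{q(·)}`, which is the norm bound (`btNorm_le`).
-/

noncomputable section
open MeasureTheory ENNReal Set
open scoped ENNReal

abbrev Rn (n : ℕ) := EuclideanSpace ℝ (Fin n)

/-- The dyadic cube `Q_{v,m}` (with `v ∈ ℕ₀`, so `|Q_{v,m}| = 2^{-vn} ≤ 1`). -/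
def dyadicCube (n : ℕ) (v : ℕ) (m : Fin n → ℤ) : Set (Rn n) :=
  {x | ∀ i, (m i : ℝ) ≤ 2 ^ v * x i ∧ 2 ^ v * x i < m i + 1}

/-- The variable-exponent modular `ϱ_{p(·)}`. -/
def modularVE (n : ℕ) (p : Rn n → ℝ) (f : Rn n → ℝ≥0∞) : ℝ≥0∞ :=
  ∫⁻ x, f x ^ p x

/-- The Luxemburg norm `‖·‖_{p(·)}`. -/
def luxNorm (n : ℕ) (p : Rn n → ℝ) (f : Rn n → ℝ≥0∞) : ℝ≥0∞ :=
  sInf {μ : ℝ≥0∞ | 0 < μ ∧ modularVE n p (fun x => f x / μ) ≤ 1}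

/-- Local log-Hölder continuity with constant `c`. -/
def LocLogHolderWith (n : ℕ) (c : ℝ) (g : Rn n → ℝ) : Prop :=
  ∀ x y : Rn n, x ≠ y → |g x - g y| ≤ c / Real.log (Real.exp 1 + 1 / ‖x - y‖)

/-- The log-Hölder decay condition. -/
def LogHolderDecay (n : ℕ) (g : Rn n → ℝ) : Prop :=
  ∃ g_inf c : ℝ, 0 < c ∧ ∀ x : Rn n, |g x - g_inf| ≤ c / Real.log (Real.exp 1 + ‖x‖)

/-- Global log-Hölder continuity. -/
def GlobLogHolder (n : ℕ) (g : Rn n → ℝ) : Prop :=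
  (∃ c : ℝ, 0 < c ∧ LocLogHolderWith n c g) ∧ LogHolderDecay n g

/-- The sequence space norm `‖λ‖_{b̃^{β(·),r(·)}_{r(·),r(·)}}`: the supremum over dyadic
cubes `P = Q_{vP,m0}` with `|P| ≤ 1` of
`‖ x ↦ ( |P|^{-1} Σ_{v≥v_P} Σ_m 2^{v(β(x)+n/2)r(x)} |λ_{v,m}|^{r(x)} χ_{v,m}(x) )^{1/r(x)} χ_P ‖_{r(·)}`;
here `|P|^{-1} = 2^{vP·n}`. -/
def btNorm (n : ℕ) (r β : Rn n → ℝ) (lam : ℕ → (Fin n → ℤ) → ℂ) : ℝ≥0∞ :=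
  ⨆ (vP : ℕ) (m0 : Fin n → ℤ),
    luxNorm n r ((dyadicCube n vP m0).indicator fun x =>
      ((2 : ℝ≥0∞) ^ ((vP : ℝ) * n) *
        ∑' (v : ℕ), ∑' (m : Fin n → ℤ),
          (if vP ≤ v then (1 : ℝ≥0∞) else 0) *
            (2 : ℝ≥0∞) ^ ((v : ℝ) * (β x + n / 2) * r x) *
              ENNReal.ofReal ‖lam v m‖ ^ r x *
                (dyadicCube n v m).indicator (fun _ => (1 : ℝ≥0∞)) x) ^ (1 / r x))

/-- `G_P^{α(·),q(·)}(λ)(x)` for a dyadic cube `P` with `v_P = vP` (it only depends on `P`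
through `v_P`):
`( Σ_{v≥v_P} Σ_m 2^{v(α(x)+n/2)q(x)} |λ_{v,m}|^{q(x)} χ_{v,m}(x) )^{1/q(x)}`. -/
def Gfun (n : ℕ) (q α : Rn n → ℝ) (vP : ℕ) (lam : ℕ → (Fin n → ℤ) → ℂ)
    (x : Rn n) : ℝ≥0∞ :=
  (∑' (v : ℕ), ∑' (m : Fin n → ℤ),
    (if vP ≤ v then (1 : ℝ≥0∞) else 0) *
      (2 : ℝ≥0∞) ^ ((v : ℝ) * (α x + n / 2) * q x) *
        ENNReal.ofReal ‖lam v m‖ ^ q x *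
          (dyadicCube n v m).indicator (fun _ => (1 : ℝ≥0∞)) x) ^ (1 / q x)

/-- `m_P^{α(·),q(·)}(λ) = inf{ε : |{x ∈ P : G_P^{α(·),q(·)}(λ)(x) > ε}| < |P|/4}`. -/
def mP (n : ℕ) (q α : Rn n → ℝ) (vP : ℕ) (m0 : Fin n → ℤ)
    (lam : ℕ → (Fin n → ℤ) → ℂ) : ℝ≥0∞ :=
  sInf {ε : ℝ≥0∞ |
    volume {x ∈ dyadicCube n vP m0 | ε < Gfun n q α vP lam x} <
      volume (dyadicCube n vP m0) / 4}

/-- `m^{α(·),q(·)}(λ)(x) = sup_P m_P^{α(·),q(·)}(λ) χ_P(x)` (supremum over dyadic cubes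
`P` with `|P| ≤ 1`). -/
def mFun (n : ℕ) (q α : Rn n → ℝ) (lam : ℕ → (Fin n → ℤ) → ℂ) (x : Rn n) : ℝ≥0∞ :=
  ⨆ (vP : ℕ) (m0 : Fin n → ℤ),
    (dyadicCube n vP m0).indicator (fun _ => mP n q α vP m0 lam) x

/-! ### Log-Hölder comparison on a cube -/

/-- With `b = 2^{v(α(y)+h)} s ≤ 1`, passing from `y` to `x` costs at most `2^{v|α(x)-α(y)|} ≤ e^D`
in the base. In the exponent it costs at most `b^{-|q(x)-q(y)|} ≤ e^B` as long as `b > 2^{-v}`,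
while for `b ≤ 2^{-v}` the additive error `2^{-v}` absorbs everything since `q(x) ≥ 1`. -/
theorem key_real (v : ℕ) (ax ay h qx qy s D B qM : ℝ) (hs : 0 ≤ s) (hqx : 1 ≤ qx) (hqxM : qx ≤ qM)
    (hqy : 1 ≤ qy) (hB0 : 0 ≤ B)
    (hD : v * Real.log 2 * |ax - ay| ≤ D) (hB : v * Real.log 2 * |qx - qy| ≤ B)
    (hA : ((2:ℝ) ^ (v * (ay + h)) * s) ^ qy ≤ 1) :
    ((2:ℝ) ^ (v * (ax + h)) * s) ^ qx ≤
      Real.exp (D * qM + B) * ((1/2) ^ v + ((2:ℝ) ^ (v * (ay + h)) * s) ^ qy) := by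
  set b := (2:ℝ) ^ (v * (ay + h)) * s with hb
  have hl2 : 0 < Real.log 2 := Real.log_pos (by norm_num)
  have hD0 : 0 ≤ D := le_trans (by positivity) hD
  have hb0 : 0 ≤ b := by positivity
  have hb1 : b ≤ 1 := by
    by_contra! hc
    exact absurd (Real.one_lt_rpow hc (by linarith : 0 < qy)) (not_lt.2 hA)
  have hx : (2:ℝ) ^ (v * (ax + h)) * s ≤ Real.exp D * b := by
    have : (2:ℝ) ^ (v * (ax + h)) = 2 ^ (v * (ax - ay)) * 2 ^ (v * (ay + h)) := by
      rw [← Real.rpow_add (by norm_num)]; congr 1; ring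
    rw [this, mul_assoc]
    refine mul_le_mul_of_nonneg_right ?_ hb0
    rw [Real.rpow_def_of_pos (by norm_num)]
    refine Real.exp_le_exp.2 (le_trans ?_ hD)
    have := mul_le_mul_of_nonneg_left (le_abs_self (ax - ay)) (by positivity : 0 ≤ v * Real.log 2)
    linarith
  have h1 : ((2:ℝ) ^ (v * (ax + h)) * s) ^ qx ≤ Real.exp (D * qM) * b ^ qx := by
    refine (Real.rpow_le_rpow (by positivity) hx (by linarith)).trans ?_
    rw [Real.mul_rpow (Real.exp_pos _).le hb0, ← Real.exp_mul]
    gcongr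
  have h2 : b ^ qx ≤ Real.exp B * ((1/2) ^ v + b ^ qy) := by
    have hbq : 0 ≤ b ^ qy := by positivity
    have hE : 1 ≤ Real.exp B := Real.one_le_exp hB0
    rcases le_or_gt b ((1/2) ^ v) with hc | hc
    · have : b ^ qx ≤ b ^ (1:ℝ) := by
        rcases hb0.eq_or_lt with h0 | h0
        · rw [← h0, Real.zero_rpow (by linarith), Real.zero_rpow (by norm_num)]
        · exact Real.rpow_le_rpow_of_exponent_ge h0 hb1 hqx
      rw [Real.rpow_one] at this
      have h3 : (0:ℝ) ≤ (1/2) ^ v + b ^ qy := by positivity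
      nlinarith
    · have hbp : 0 < b := lt_trans (by positivity) hc
      have h3 : b ^ qx = b ^ (qx - qy) * b ^ qy := by
        rw [← Real.rpow_add hbp]; congr 1; ring
      have h4 : b ^ (qx - qy) ≤ Real.exp B := by
        rw [Real.rpow_def_of_pos hbp]
        refine Real.exp_le_exp.2 (le_trans (le_abs_self _) (le_trans ?_ hB))
        rw [abs_mul]
        refine mul_le_mul_of_nonneg_right ?_ (abs_nonneg _)
        rw [abs_of_nonpos (Real.log_nonpos hb0 hb1)]
        have := Real.log_le_log (by positivity) hc.le
        rw [Real.log_pow, one_div, Real.log_inv] at this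
        linarith
      rw [h3]
      have : (0:ℝ) ≤ (1/2) ^ v := by positivity
      nlinarith [Real.exp_pos B]
  calc _ ≤ _ := h1
    _ ≤ Real.exp (D * qM) * (Real.exp B * ((1/2) ^ v + b ^ qy)) := by gcongr
    _ = _ := by rw [Real.exp_add]; ring

theorem norm_sub_le_of_mem (n v : ℕ) (m : Fin n → ℤ) (x y : Rn n) (hx : x ∈ dyadicCube n v m)
    (hy : y ∈ dyadicCube n v m) : ‖x - y‖ ≤ n / 2 ^ v := by
  have h : ∀ i, ‖(x - y) i‖ ≤ 1 / 2 ^ v := by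
    intro i
    have h2 : (0:ℝ) < 2 ^ v := by positivity
    rw [le_div_iff₀ h2, Real.norm_eq_abs, PiLp.sub_apply]
    have h3 : |x i - y i| * 2 ^ v = |(x i - y i) * 2 ^ v| := by rw [abs_mul, abs_of_pos h2]
    rw [h3, abs_le]
    obtain ⟨a, b⟩ := hx i
    obtain ⟨c, d⟩ := hy i
    constructor <;> nlinarith
  have h0 : x - y = ∑ i, EuclideanSpace.single i ((x - y) i) := by
    ext j
    simp [Finset.sum_apply, Pi.single_apply]
  rw [h0]
  refine (norm_sum_le _ _).trans ?_
  refine (Finset.sum_le_sum fun i _ => ?_).trans (b := ∑ i : Fin n, (1 / 2 ^ v : ℝ)) ?_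
  · rw [PiLp.norm_single]; exact h i
  · simp [div_eq_mul_inv]

/-- On a cube of side `2^{-v}` the oscillation of a log-Hölder function is `O(1/v)`, because
`v log 2 ≤ log (e + 1/|x-y|) + log n` there. -/
theorem logHolder_cube (n : ℕ) (hn : 1 ≤ n) (c : ℝ) (hc : 0 < c) (g : Rn n → ℝ)
    (hg : LocLogHolderWith n c g) (v : ℕ) (m : Fin n → ℤ) (x y : Rn n)
    (hx : x ∈ dyadicCube n v m) (hy : y ∈ dyadicCube n v m) :
    v * Real.log 2 * |g x - g y| ≤ c * (1 + Real.log n) := by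
  have hn' : (1:ℝ) ≤ n := by exact_mod_cast hn
  have hln : 0 ≤ Real.log n := Real.log_nonneg hn'
  have hl2 : 0 < Real.log 2 := Real.log_pos (by norm_num)
  rcases eq_or_ne x y with rfl | hxy
  · simp; positivity
  have hr : 0 < ‖x - y‖ := norm_pos_iff.2 (sub_ne_zero.2 hxy)
  set ℓ := Real.log (Real.exp 1 + 1 / ‖x - y‖) with hℓ
  have hℓ1 : 1 ≤ ℓ := by
    rw [hℓ, Real.le_log_iff_exp_le (by positivity)]
    have : 0 < 1 / ‖x - y‖ := by positivity
    linarith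
  have hv : v * Real.log 2 ≤ ℓ + Real.log n := by
    rw [hℓ, ← Real.log_mul (by positivity) (by positivity), ← Real.log_pow]
    refine Real.log_le_log (by positivity) ?_
    have h1 := norm_sub_le_of_mem n v m x y hx hy
    rw [le_div_iff₀ (by positivity)] at h1
    have h2 : (2:ℝ) ^ v ≤ 1 / ‖x - y‖ * n := by
      rw [one_div_mul_eq_div, le_div_iff₀ hr]; linarith
    have := Real.exp_pos 1
    nlinarith
  calc v * Real.log 2 * |g x - g y| ≤ (ℓ + Real.log n) * (c / ℓ) := by
        gcongr
        exact hg x y hxy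
    _ = c * ((ℓ + Real.log n) / ℓ) := by ring
    _ ≤ _ := by
        gcongr
        rw [div_le_iff₀ (by linarith)]
        nlinarith

/-! ### Dyadic cubes -/

theorem mem_dyadicCube_iff (n v : ℕ) (m : Fin n → ℤ) (x : Rn n) :
    x ∈ dyadicCube n v m ↔ m = fun i => ⌊(2:ℝ) ^ v * x i⌋ := by
  rw [funext_iff]
  refine forall_congr' fun i => ?_
  rw [eq_comm, Int.floor_eq_iff]

theorem dyadicCube_subset (n vP v : ℕ) (hv : vP ≤ v) (m0 m : Fin n → ℤ) (x : Rn n)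
    (hx : x ∈ dyadicCube n v m) (hx0 : x ∈ dyadicCube n vP m0) :
    dyadicCube n v m ⊆ dyadicCube n vP m0 := by
  intro y hy i
  obtain ⟨k, rfl⟩ := Nat.exists_eq_add_of_le hv
  obtain ⟨a, b⟩ := hx i
  obtain ⟨c, d⟩ := hx0 i
  obtain ⟨e, f⟩ := hy i
  have h2 : (0:ℝ) < 2 ^ k := by positivity
  rw [pow_add] at a b e f
  -- the index of the small cube lies in `[2^k m₀, 2^k (m₀ + 1) - 1]`
  have h3 : m0 i * 2 ^ k ≤ m i := by
    rw [← Int.lt_add_one_iff]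
    have : (m0 i * 2 ^ k : ℝ) < m i + 1 := by nlinarith
    exact_mod_cast this
  have h4 : m i + 1 ≤ (m0 i + 1) * 2 ^ k := by
    rw [Int.add_one_le_iff]
    have : (m i : ℝ) < (m0 i + 1) * 2 ^ k := by nlinarith
    exact_mod_cast this
  have h3' : (m0 i * 2 ^ k : ℝ) ≤ m i := by exact_mod_cast h3
  have h4' : (m i + 1 : ℝ) ≤ (m0 i + 1) * 2 ^ k := by exact_mod_cast h4
  constructor
  · refine le_of_mul_le_mul_right ?_ h2; nlinarith
  · refine lt_of_mul_lt_mul_right ?_ h2.le; nlinarith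

theorem dyadicCube_eq_preimage (n v : ℕ) (m : Fin n → ℤ) :
    dyadicCube n v m = (WithLp.ofLp : Rn n → (Fin n → ℝ)) ⁻¹'
      (Set.univ.pi fun i => Set.Ico ((m i : ℝ) / 2 ^ v) ((m i + 1) / 2 ^ v)) := by
  ext x
  simp only [dyadicCube, Set.mem_ofPred_eq, Set.mem_preimage, Set.mem_pi, Set.mem_univ,
    true_implies, Set.mem_Ico]
  refine forall_congr' fun i => ?_
  rw [div_le_iff₀ (by positivity), lt_div_iff₀ (by positivity), mul_comm]

theorem measurableSet_dyadicCube (n v : ℕ) (m : Fin n → ℤ) :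
    MeasurableSet (dyadicCube n v m) := by
  rw [dyadicCube_eq_preimage]
  exact (PiLp.volume_preserving_ofLp (Fin n)).measurable
    (MeasurableSet.univ_pi fun i => measurableSet_Ico)

theorem volume_dyadicCube (n v : ℕ) (m : Fin n → ℤ) :
    volume (dyadicCube n v m) = ((2 : ℝ≥0∞) ^ ((v : ℝ) * n))⁻¹ := by
  rw [dyadicCube_eq_preimage,
    (PiLp.volume_preserving_ofLp (Fin n)).measure_preimage
      (MeasurableSet.univ_pi fun i => measurableSet_Ico).nullMeasurableSet,
    Real.volume_pi_Ico]
  have : ∀ i : Fin n, ENNReal.ofReal ((m i + 1) / 2 ^ v - m i / 2 ^ v) = ((2:ℝ≥0∞) ^ v)⁻¹ := by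
    intro i
    rw [← sub_div, add_sub_cancel_left, one_div, ENNReal.ofReal_inv_of_pos (by positivity),
      ENNReal.ofReal_pow (by norm_num)]
    norm_num
  simp only [this]
  rw [Finset.prod_const, Finset.card_univ, Fintype.card_fin, ← ENNReal.inv_pow, ← pow_mul,
    ← Nat.cast_mul, ENNReal.rpow_natCast]

/-! ### The normalised summands and sums -/

/-- The summand `(2^{v(α(x)+n/2)} |λ_{v,m}| / M)^{q(x)}` normalised by a real level `M > 0`, without
the characteristic function of `Q_{v,m}`. -/
def Ufun (n : ℕ) (q α : Rn n → ℝ) (lam : ℕ → (Fin n → ℤ) → ℂ) (M : ℝ) (v : ℕ) (m : Fin n → ℤ)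
    (x : Rn n) : ℝ≥0∞ :=
  ENNReal.ofReal (((2 : ℝ) ^ ((v : ℝ) * (α x + n / 2)) * (‖lam v m‖ / M)) ^ q x)

/-- The normalised sum `∑_{v ≥ vP} ∑_m U_{v,m}(x) χ_{v,m}(x)`; it equals `(G_P(x) / M)^{q(x)}` for
every cube `P` of generation `vP` (see `Gfun_div_rpow`). -/
def Nfun (n : ℕ) (q α : Rn n → ℝ) (lam : ℕ → (Fin n → ℤ) → ℂ) (M : ℝ) (vP : ℕ) (x : Rn n) :
    ℝ≥0∞ :=
  ∑' (v : ℕ), ∑' (m : Fin n → ℤ),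
    if vP ≤ v then (dyadicCube n v m).indicator (Ufun n q α lam M v m) x else 0

theorem Gfun_div_rpow (n : ℕ) (q α : Rn n → ℝ) (lam : ℕ → (Fin n → ℤ) → ℂ) (M : ℝ) (hM : 0 < M)
    (vP : ℕ) (x : Rn n) (hq : 1 ≤ q x) :
    (Gfun n q α vP lam x / ENNReal.ofReal M) ^ q x = Nfun n q α lam M vP x := by
  have hq0 : 0 < q x := by linarith
  rw [ENNReal.div_rpow_of_nonneg _ _ hq0.le, Gfun, ← ENNReal.rpow_mul, one_div_mul_cancel hq0.ne',
    ENNReal.rpow_one, div_eq_mul_inv, ← ENNReal.tsum_mul_right, Nfun]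
  refine tsum_congr fun v => ?_
  rw [← ENNReal.tsum_mul_right]
  refine tsum_congr fun m => ?_
  by_cases hv : vP ≤ v
  · by_cases hx : x ∈ dyadicCube n v m
    · simp only [hv, if_true, Set.indicator_of_mem hx, one_mul, mul_one]
      rw [Ufun, ← ENNReal.ofReal_rpow_of_nonneg (by positivity) hq0.le,
        ENNReal.ofReal_mul (by positivity), ENNReal.mul_rpow_of_nonneg _ _ hq0.le,
        ENNReal.ofReal_div_of_pos hM, ENNReal.div_rpow_of_nonneg _ _ hq0.le,
        ← ENNReal.ofReal_rpow_of_pos (by norm_num), ← ENNReal.rpow_mul, ENNReal.ofReal_ofNat,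
        mul_assoc, ← div_eq_mul_inv (ENNReal.ofReal ‖lam v m‖ ^ q x)]
    · simp [hx]
  · simp [hv]

theorem measurable_Ufun (n : ℕ) (q α : Rn n → ℝ) (hq : Measurable q) (hα : Measurable α)
    (lam : ℕ → (Fin n → ℤ) → ℂ) (M : ℝ) (v : ℕ) (m : Fin n → ℤ) :
    Measurable (Ufun n q α lam M v m) := by
  unfold Ufun
  fun_prop

theorem measurable_summand (n : ℕ) (q α : Rn n → ℝ) (hq : Measurable q) (hα : Measurable α)
    (lam : ℕ → (Fin n → ℤ) → ℂ) (M : ℝ) (vP v : ℕ) (m : Fin n → ℤ) :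
    Measurable fun x => if vP ≤ v then (dyadicCube n v m).indicator (Ufun n q α lam M v m) x
      else 0 := by
  split_ifs
  · exact (measurable_Ufun n q α hq hα lam M v m).indicator (measurableSet_dyadicCube n v m)
  · exact measurable_const

theorem measurable_Nfun (n : ℕ) (q α : Rn n → ℝ) (hq : Measurable q) (hα : Measurable α)
    (lam : ℕ → (Fin n → ℤ) → ℂ) (M : ℝ) (vP : ℕ) : Measurable (Nfun n q α lam M vP) :=
  Measurable.tsum fun v => Measurable.tsum fun m =>
    measurable_summand n q α hq hα lam M vP v m

theorem measurable_Gfun (n : ℕ) (q α : Rn n → ℝ) (hq : Measurable q) (hα : Measurable α)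
    (hq1 : ∀ x, 1 ≤ q x)
    (lam : ℕ → (Fin n → ℤ) → ℂ) (vP : ℕ) : Measurable (Gfun n q α vP lam) := by
  have : Gfun n q α vP lam = fun x => Nfun n q α lam 1 vP x ^ (1 / q x) := by
    funext x
    rw [← Gfun_div_rpow n q α lam 1 one_pos vP x (hq1 x), ENNReal.ofReal_one, div_one,
      ← ENNReal.rpow_mul, mul_one_div_cancel (by linarith [hq1 x]), ENNReal.rpow_one]
  rw [this]
  have := measurable_Nfun n q α hq hα lam 1 vP
  fun_prop

/-- The modular in the definition of `btNorm`, at level `μ`, is the average over `P` of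
`(G_P / μ)^{q(·)}`. -/
theorem modular_eq (n : ℕ) (q α : Rn n → ℝ) (hq1 : ∀ x, 1 ≤ q x)
    (lam : ℕ → (Fin n → ℤ) → ℂ) (μ : ℝ≥0∞) (vP : ℕ) (m0 : Fin n → ℤ) :
    modularVE n q (fun x => ((dyadicCube n vP m0).indicator fun x =>
      ((2 : ℝ≥0∞) ^ ((vP : ℝ) * n) *
        ∑' (v : ℕ), ∑' (m : Fin n → ℤ),
          (if vP ≤ v then (1 : ℝ≥0∞) else 0) *
            (2 : ℝ≥0∞) ^ ((v : ℝ) * (α x + n / 2) * q x) *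
              ENNReal.ofReal ‖lam v m‖ ^ q x *
                (dyadicCube n v m).indicator (fun _ => (1 : ℝ≥0∞)) x) ^ (1 / q x)) x / μ) =
    (volume (dyadicCube n vP m0))⁻¹ *
      ∫⁻ x in dyadicCube n vP m0, (Gfun n q α vP lam x / μ) ^ q x := by
  rw [volume_dyadicCube, inv_inv, ← lintegral_const_mul' _ _ (by simp),
    ← lintegral_indicator (measurableSet_dyadicCube n vP m0), modularVE]
  refine lintegral_congr fun x => ?_
  have hq0 : 0 < q x := by linarith [hq1 x]
  by_cases hx : x ∈ dyadicCube n vP m0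
  · rw [Set.indicator_of_mem hx, Set.indicator_of_mem hx,
      ENNReal.mul_rpow_of_nonneg _ _ (by positivity : 0 ≤ 1 / q x), mul_div_assoc,
      ENNReal.mul_rpow_of_nonneg _ _ hq0.le, ← ENNReal.rpow_mul, one_div_mul_cancel hq0.ne',
      ENNReal.rpow_one]
    rfl
  · rw [Set.indicator_of_notMem hx, Set.indicator_of_notMem hx, ENNReal.zero_div,
      ENNReal.zero_rpow_of_pos hq0]

/-! ### The upper bound -/

theorem volume_cube_ne_zero (n v : ℕ) (m : Fin n → ℤ) : volume (dyadicCube n v m) ≠ 0 := by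
  rw [volume_dyadicCube]; simp

theorem volume_cube_ne_top (n v : ℕ) (m : Fin n → ℤ) : volume (dyadicCube n v m) ≠ ⊤ := by
  rw [volume_dyadicCube]; simp

/-- Chebyshev: if the average of `(G_P / μ)^{q(·)}` over `P` is at most `1`, then
`G_P > 5μ` on at most a fifth of `P`, as `5^{q(x)} ≥ 5`. -/
theorem upper (n : ℕ) (q α : Rn n → ℝ) (hq : Measurable q) (hα : Measurable α)
    (hq1 : ∀ x, 1 ≤ q x) (lam : ℕ → (Fin n → ℤ) → ℂ) (vP : ℕ) (m0 : Fin n → ℤ) :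
    mP n q α vP m0 lam ≤ 5 * btNorm n q α lam := by
  refine le_trans ?_ (mul_le_mul_right (le_iSup₂ vP m0) 5)
  rw [mul_comm, ← ENNReal.div_le_iff (by norm_num) (by norm_num), luxNorm]
  refine le_sInf ?_
  rintro μ ⟨hμ0, hμ⟩
  rw [modular_eq n q α hq1] at hμ
  rw [ENNReal.div_le_iff (by norm_num) (by norm_num)]
  rcases eq_or_ne μ ⊤ with rfl | hμt
  · rw [ENNReal.top_mul (by norm_num)]; exact le_top
  refine sInf_le ?_
  set P := dyadicCube n vP m0 with hP
  have hPm : MeasurableSet P := measurableSet_dyadicCube n vP m0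
  have hG := measurable_Gfun n q α hq hα hq1 lam vP
  have hE : MeasurableSet {x ∈ P | μ * 5 < Gfun n q α vP lam x} :=
    hPm.inter (measurableSet_lt measurable_const hG)
  set E := {x ∈ P | μ * 5 < Gfun n q α vP lam x} with hEdef
  have hP0 : volume P ≠ 0 := volume_cube_ne_zero n vP m0
  have hPt : volume P ≠ ⊤ := volume_cube_ne_top n vP m0
  have h1 : ∫⁻ x in P, (Gfun n q α vP lam x / μ) ^ q x ≤ volume P := by
    rw [mul_comm, ← div_eq_mul_inv, ENNReal.div_le_iff hP0 hPt, one_mul] at hμ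
    exact hμ
  have h2 : 5 * volume E ≤ volume P := by
    refine le_trans ?_ h1
    rw [← setLIntegral_const]
    refine (setLIntegral_mono' hE fun x hx => ?_).trans
      (lintegral_mono_set (fun x hx => hx.1 : E ⊆ P))
    have h5 : (5 : ℝ≥0∞) ≤ Gfun n q α vP lam x / μ := by
      rw [ENNReal.le_div_iff_mul_le (Or.inl hμ0.ne') (Or.inl hμt), mul_comm]
      exact hx.2.le
    calc (5 : ℝ≥0∞) ≤ 5 ^ q x := by
          conv_lhs => rw [← ENNReal.rpow_one 5]
          exact ENNReal.rpow_le_rpow_of_exponent_le (by norm_num) (hq1 x)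
      _ ≤ _ := ENNReal.rpow_le_rpow h5 (by linarith [hq1 x])
  have h3 : volume E ≤ volume P / 5 := by
    rw [ENNReal.le_div_iff_mul_le (by norm_num) (by norm_num), mul_comm]; exact h2
  refine lt_of_le_of_lt h3 ?_
  exact ENNReal.div_lt_div_left hP0 hPt (by norm_num)

/-- The essential supremum sees every `m_P`, since `P` has positive measure. -/
theorem mP_le_essSup (n : ℕ) (q α : Rn n → ℝ) (lam : ℕ → (Fin n → ℤ) → ℂ) (vP : ℕ)
    (m0 : Fin n → ℤ) :
    mP n q α vP m0 lam ≤ essSup (mFun n q α lam) (volume : Measure (Rn n)) := by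
  have h : ∃ x ∈ dyadicCube n vP m0, mFun n q α lam x ≤ essSup (mFun n q α lam) volume := by
    by_contra! hc
    refine volume_cube_ne_zero n vP m0 (measure_mono_null (fun x hx => ?_)
      (ENNReal.ae_le_essSup (mFun n q α lam)))
    exact not_le.2 (hc x hx)
  obtain ⟨x, hx, hle⟩ := h
  refine le_trans ?_ hle
  refine le_trans ?_ (le_iSup₂ vP m0)
  rw [Set.indicator_of_mem hx]

theorem essSup_le_of_mP (n : ℕ) (q α : Rn n → ℝ) (lam : ℕ → (Fin n → ℤ) → ℂ) (C : ℝ≥0∞)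
    (h : ∀ vP m0, mP n q α vP m0 lam ≤ C) :
    essSup (mFun n q α lam) (volume : Measure (Rn n)) ≤ C := by
  refine essSup_le_of_ae_le C (Filter.Eventually.of_forall fun x => ?_)
  refine iSup₂_le fun vP m0 => ?_
  exact Set.indicator_apply_le' (fun _ => h vP m0) (fun _ => zero_le)

/-! ### The lower bound -/

theorem tsum_indicator_one (n v : ℕ) (x : Rn n) :
    ∑' m : Fin n → ℤ, (dyadicCube n v m).indicator (fun _ => (1 : ℝ≥0∞)) x = 1 := by
  rw [tsum_eq_single (fun i => ⌊(2:ℝ) ^ v * x i⌋)]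
  · rw [Set.indicator_of_mem]; rw [mem_dyadicCube_iff]
  · intro m hm
    rw [Set.indicator_of_notMem]; rwa [mem_dyadicCube_iff]

/-- The set where the normalised sum from generation `v` on is at most `1`, that is, where
`G_Q ≤ M` for the cubes `Q` of generation `v`. -/
def goodSet (n : ℕ) (q α : Rn n → ℝ) (lam : ℕ → (Fin n → ℤ) → ℂ) (M : ℝ) (v : ℕ) : Set (Rn n) :=
  {x | Nfun n q α lam M v x ≤ 1}

theorem Ufun_le_Nfun (n : ℕ) (q α : Rn n → ℝ) (lam : ℕ → (Fin n → ℤ) → ℂ) (M : ℝ) (v : ℕ)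
    (m : Fin n → ℤ) (x : Rn n) (hx : x ∈ dyadicCube n v m) :
    Ufun n q α lam M v m x ≤ Nfun n q α lam M v x := by
  refine le_trans ?_ (ENNReal.le_tsum v)
  refine le_trans ?_ (ENNReal.le_tsum m)
  simp [hx]

/-- Keeping the summand of generation `v` only at points of the good set of that generation bounds
the sum by `1`: the sum starts at the first generation `v₀ ≥ vP` for which `x` is good, and its tail
from `v₀` on is at most `1` by the definition of goodness. -/
theorem sum_good_le_one (n : ℕ) (q α : Rn n → ℝ) (lam : ℕ → (Fin n → ℤ) → ℂ) (M : ℝ) (vP : ℕ)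
    (x : Rn n) :
    ∑' (v : ℕ), ∑' (m : Fin n → ℤ), (if vP ≤ v then (dyadicCube n v m).indicator
      ((goodSet n q α lam M v).indicator (Ufun n q α lam M v m)) x else 0) ≤ 1 := by
  classical
  by_cases h : ∃ v, vP ≤ v ∧ x ∈ goodSet n q α lam M v
  · have h0 := Nat.find_spec h
    refine le_trans (ENNReal.tsum_le_tsum fun v => ENNReal.tsum_le_tsum fun m => ?_) h0.2
    by_cases hg : vP ≤ v ∧ x ∈ goodSet n q α lam M v
    · have := Nat.find_min' h hg
      simp only [hg.1, this, if_true]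
      by_cases hx : x ∈ dyadicCube n v m
      · simp [hx, hg.2]
      · simp [hx]
    · by_cases hv : vP ≤ v
      · have : x ∉ goodSet n q α lam M v := fun hc => hg ⟨hv, hc⟩
        simp [Set.indicator, this]
      · simp [hv]
  · push Not at h
    refine le_of_eq_of_le ?_ zero_le_one
    rw [ENNReal.tsum_eq_zero]
    intro v
    rw [ENNReal.tsum_eq_zero]
    intro m
    split_ifs with hv
    · simp [Set.indicator, h v hv]
    · rfl

/-- If `m_Q < M`, the good set fills at least half of `Q`. -/
theorem half_le_good (n : ℕ) (q α : Rn n → ℝ) (hq1 : ∀ x, 1 ≤ q x)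
    (lam : ℕ → (Fin n → ℤ) → ℂ) (M : ℝ) (hM : 0 < M) (v : ℕ) (m : Fin n → ℤ)
    (hmP : mP n q α v m lam < ENNReal.ofReal M) :
    volume (dyadicCube n v m) ≤ 2 * volume (dyadicCube n v m ∩ goodSet n q α lam M v) := by
  set Q := dyadicCube n v m
  have hQt : volume Q ≠ ⊤ := volume_cube_ne_top n v m
  obtain ⟨ε, hε, hεM⟩ := sInf_lt_iff.1 hmP
  have hbad : volume (Q \ goodSet n q α lam M v) ≤ volume Q / 2 := by
    refine le_trans (measure_mono ?_) (hε.le.trans (ENNReal.div_le_div_left (by norm_num) _))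
    rintro x ⟨hx, hxg⟩
    refine ⟨hx, hεM.trans ?_⟩
    by_contra! hc
    apply hxg
    change Nfun n q α lam M v x ≤ 1
    rw [← Gfun_div_rpow n q α lam M hM v x (hq1 x)]
    refine ENNReal.rpow_le_one ?_ (by linarith [hq1 x])
    exact ENNReal.div_le_of_le_mul (by rwa [one_mul])
  have h1 : volume Q / 2 ≤ volume (Q ∩ goodSet n q α lam M v) := by
    have h2 := measure_le_inter_add_sdiff volume Q (goodSet n q α lam M v)
    have h3 := h2.trans (add_le_add_right hbad _)
    nth_rewrite 1 [← ENNReal.add_halves (volume Q)] at h3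
    exact (ENNReal.add_le_add_iff_right (ENNReal.div_ne_top hQt (by norm_num))).1 h3
  rw [mul_comm]
  exact (ENNReal.div_le_iff (by norm_num) (by norm_num)).1 h1

/-- On a cube the integral of a summand is controlled by its integral over the good part, up to the
summable error `2^{-v}`: by `key_real` the values of `U` on `Q` are dominated by `2^{-v}` plus its
infimum over the good part, which fills half of `Q`. -/
theorem cube_estimate (n : ℕ) (q α : Rn n → ℝ) (hqm : Measurable q) (hαm : Measurable α)
    (hq1 : ∀ x, 1 ≤ q x) (qM D B : ℝ) (hB0 : 0 ≤ B) (hqM : ∀ᵐ x, q x ≤ qM)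
    (lam : ℕ → (Fin n → ℤ) → ℂ) (M : ℝ) (hM : 0 < M) (v : ℕ) (m : Fin n → ℤ)
    (hD : ∀ x ∈ dyadicCube n v m, ∀ y ∈ dyadicCube n v m, v * Real.log 2 * |α x - α y| ≤ D)
    (hB : ∀ x ∈ dyadicCube n v m, ∀ y ∈ dyadicCube n v m, q x ≤ qM → q y ≤ qM →
      v * Real.log 2 * |q x - q y| ≤ B)
    (hmP : mP n q α v m lam < ENNReal.ofReal M) :
    ∫⁻ x in dyadicCube n v m, Ufun n q α lam M v m x ≤
      ENNReal.ofReal (Real.exp (D * qM + B)) * ∫⁻ x in dyadicCube n v m,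
        ((2⁻¹ : ℝ≥0∞) ^ v + 2 * (goodSet n q α lam M v).indicator (Ufun n q α lam M v m) x) := by
  set Q := dyadicCube n v m with hQ
  set K := ENNReal.ofReal (Real.exp (D * qM + B)) with hK
  set U := Ufun n q α lam M v m with hU
  have hUm : Measurable U := measurable_Ufun n q α hqm hαm lam M v m
  have hQm : MeasurableSet Q := measurableSet_dyadicCube n v m
  have hgm : MeasurableSet (goodSet n q α lam M v) :=
    measurableSet_le (measurable_Nfun n q α hqm hαm lam M v) measurable_const
  have hpt : ∀ x ∈ Q, q x ≤ qM → ∀ y ∈ Q ∩ goodSet n q α lam M v, q y ≤ qM →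
      U x ≤ K * ((2⁻¹ : ℝ≥0∞) ^ v + U y) := by
    intro x hx hqx y hy hqy
    have h1 : U y ≤ 1 := (Ufun_le_Nfun n q α lam M v m y hy.1).trans hy.2
    have h2 := key_real v (α x) (α y) (n / 2) (q x) (q y) (‖lam v m‖ / M) D B qM (by positivity)
      (hq1 x) hqx (hq1 y) hB0 (hD x hx y hy.1) (hB x hx y hy.1 hqx hqy)
      (ENNReal.ofReal_le_one.1 h1)
    refine (ENNReal.ofReal_le_ofReal h2).trans_eq ?_
    rw [ENNReal.ofReal_mul (Real.exp_pos _).le, ENNReal.ofReal_add (by positivity) (by positivity),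
      ENNReal.ofReal_pow (by positivity), one_div, ENNReal.ofReal_inv_of_pos (by norm_num),
      ENNReal.ofReal_ofNat]
    rfl
  -- the bound `q ≤ qM` holds only almost everywhere, so the infimum skips the exceptional points
  set c : ℝ≥0∞ := ⨅ y ∈ {y | y ∈ Q ∩ goodSet n q α lam M v ∧ q y ≤ qM}, U y with hc
  have hc1 : ∀ᵐ x ∂(volume.restrict Q), U x ≤ K * ((2⁻¹ : ℝ≥0∞) ^ v + c) := by
    filter_upwards [ae_restrict_mem hQm, ae_restrict_of_ae hqM] with x hx hqx
    have hK0 : K ≠ 0 := by rw [hK]; simp [Real.exp_pos]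
    have hKt : K ≠ ⊤ := ENNReal.ofReal_ne_top
    rw [mul_comm, ← ENNReal.div_le_iff hK0 hKt, ← tsub_le_iff_left]
    refine le_iInf₂ fun y hy => ?_
    rw [tsub_le_iff_left, ENNReal.div_le_iff hK0 hKt, mul_comm]
    exact hpt x hx hqx y hy.1 hy.2
  have hc2 : c * volume Q ≤ 2 * ∫⁻ x in Q, (goodSet n q α lam M v).indicator U x := by
    calc c * volume Q ≤ c * (2 * volume (Q ∩ goodSet n q α lam M v)) := by
          gcongr; exact half_le_good n q α hq1 lam M hM v m hmP
      _ = 2 * ∫⁻ _ in Q ∩ goodSet n q α lam M v, c := by rw [setLIntegral_const]; ring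
      _ ≤ 2 * ∫⁻ x in Q ∩ goodSet n q α lam M v, U x := by
          refine mul_le_mul_right (lintegral_mono_ae ?_) _
          filter_upwards [ae_restrict_mem (hQm.inter hgm), ae_restrict_of_ae hqM] with x hx hqx
          exact iInf₂_le x ⟨hx, hqx⟩
      _ = _ := by rw [setLIntegral_indicator hgm, Set.inter_comm]
  calc ∫⁻ x in Q, U x ≤ ∫⁻ _ in Q, K * ((2⁻¹ : ℝ≥0∞) ^ v + c) := lintegral_mono_ae hc1
    _ = K * ((2⁻¹ : ℝ≥0∞) ^ v * volume Q + c * volume Q) := by rw [setLIntegral_const]; ring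
    _ ≤ K * ((2⁻¹ : ℝ≥0∞) ^ v * volume Q +
          2 * ∫⁻ x in Q, (goodSet n q α lam M v).indicator U x) := by gcongr
    _ = _ := by
        rw [lintegral_add_left measurable_const, setLIntegral_const,
          lintegral_const_mul _ (hUm.indicator hgm)]

/-- Summing the cube estimates over all cubes inside `P`: the errors `2^{-v}` add up to at most `2`
pointwise, and the good parts to at most `2` by `sum_good_le_one`. -/
theorem integral_Nfun_le (n : ℕ) (q α : Rn n → ℝ) (hqm : Measurable q) (hαm : Measurable α)
    (lam : ℕ → (Fin n → ℤ) → ℂ) (M : ℝ) (K : ℝ≥0∞)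
    (hest : ∀ v m, ∫⁻ x in dyadicCube n v m, Ufun n q α lam M v m x ≤
      K * ∫⁻ x in dyadicCube n v m,
        ((2⁻¹ : ℝ≥0∞) ^ v + 2 * (goodSet n q α lam M v).indicator (Ufun n q α lam M v m) x))
    (vP : ℕ) (m0 : Fin n → ℤ) :
    ∫⁻ x in dyadicCube n vP m0, Nfun n q α lam M vP x ≤ K * 4 * volume (dyadicCube n vP m0) := by
  set P := dyadicCube n vP m0 with hP
  have hPm : MeasurableSet P := measurableSet_dyadicCube n vP m0
  have hgm : ∀ v, MeasurableSet (goodSet n q α lam M v) := fun v =>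
    measurableSet_le (measurable_Nfun n q α hqm hαm lam M v) measurable_const
  -- `W v m` is the majorant of the `(v, m)` summand, supported on `Q_{v,m}`.
  set W : ℕ → (Fin n → ℤ) → Rn n → ℝ≥0∞ := fun v m x => if vP ≤ v then
    (dyadicCube n v m).indicator (fun x => (2⁻¹ : ℝ≥0∞) ^ v +
      2 * (goodSet n q α lam M v).indicator (Ufun n q α lam M v m) x) x else 0 with hW
  have hWm : ∀ v m, Measurable (W v m) := by
    intro v m
    simp only [hW]
    split_ifs
    · refine Measurable.indicator ?_ (measurableSet_dyadicCube n v m)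
      have := (measurable_Ufun n q α hqm hαm lam M v m).indicator (hgm v)
      fun_prop
    · exact measurable_const
  have hterm : ∀ v m, ∫⁻ x in P, (if vP ≤ v then
      (dyadicCube n v m).indicator (Ufun n q α lam M v m) x else 0) ≤ K * ∫⁻ x in P, W v m x := by
    intro v m
    by_cases hv : vP ≤ v
    · simp only [hW, hv, if_true]
      rw [setLIntegral_indicator (measurableSet_dyadicCube n v m),
        setLIntegral_indicator (measurableSet_dyadicCube n v m)]
      -- a cube of generation `v ≥ vP` is either disjoint from `P` or contained in it
      rcases (dyadicCube n v m ∩ P).eq_empty_or_nonempty with he | ⟨x, hx, hxP⟩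
      · rw [he]; simp
      · rw [Set.inter_eq_left.2 (dyadicCube_subset n vP v hv m0 m x hx hxP)]
        exact hest v m
    · simp [hv]
  have hsum : ∀ x, ∑' v, ∑' m, W v m x ≤ 4 := by
    intro x
    have hsplit : ∀ v m, W v m x ≤ (2⁻¹ : ℝ≥0∞) ^ v *
        (dyadicCube n v m).indicator (fun _ => (1 : ℝ≥0∞)) x +
        2 * (if vP ≤ v then (dyadicCube n v m).indicator
      ((goodSet n q α lam M v).indicator (Ufun n q α lam M v m)) x else 0) := by
      intro v m
      simp only [hW]
      split_ifs
      · by_cases hx : x ∈ dyadicCube n v m <;> simp [hx]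
      · exact zero_le
    refine (ENNReal.tsum_le_tsum fun v => ENNReal.tsum_le_tsum fun m => hsplit v m).trans ?_
    simp only [ENNReal.tsum_add, ENNReal.tsum_mul_left, tsum_indicator_one, mul_one,
      ENNReal.tsum_geometric, ENNReal.one_sub_inv_two, inv_inv]
    refine (add_le_add_right (mul_le_mul_right (sum_good_le_one n q α lam M vP x) 2) 2).trans ?_
    norm_num
  calc ∫⁻ x in P, Nfun n q α lam M vP x
      = ∑' v, ∑' m, ∫⁻ x in P, (if vP ≤ v then
          (dyadicCube n v m).indicator (Ufun n q α lam M v m) x else 0) := by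
        unfold Nfun
        rw [lintegral_tsum fun v => (Measurable.tsum fun m =>
          measurable_summand n q α hqm hαm lam M vP v m).aemeasurable]
        refine tsum_congr fun v => ?_
        rw [lintegral_tsum fun m =>
          (measurable_summand n q α hqm hαm lam M vP v m).aemeasurable]
    _ ≤ ∑' v, ∑' m, K * ∫⁻ x in P, W v m x :=
        ENNReal.tsum_le_tsum fun v => ENNReal.tsum_le_tsum fun m => hterm v m
    _ = K * ∫⁻ x in P, ∑' v, ∑' m, W v m x := by
        simp only [ENNReal.tsum_mul_left]
        rw [lintegral_tsum fun v => (Measurable.tsum fun m => hWm v m).aemeasurable]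
        congr 1
        refine tsum_congr fun v => ?_
        rw [lintegral_tsum fun m => (hWm v m).aemeasurable]
    _ ≤ K * ∫⁻ _ in P, 4 := by gcongr with x; exact hsum x
    _ = _ := by rw [setLIntegral_const, mul_assoc]

/-- A uniform bound `C ≥ 1` for the averages of `(G_P / M)^{q(·)}` gives the norm bound `C M`, since
`C^{-q(x)} ≤ C⁻¹`. -/
theorem btNorm_le (n : ℕ) (q α : Rn n → ℝ) (hq1 : ∀ x, 1 ≤ q x)
    (lam : ℕ → (Fin n → ℤ) → ℂ) (M : ℝ) (hM : 0 < M) (C : ℝ) (hC : 1 ≤ C)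
    (h : ∀ vP m0, ∫⁻ x in dyadicCube n vP m0, Nfun n q α lam M vP x ≤
      ENNReal.ofReal C * volume (dyadicCube n vP m0)) :
    btNorm n q α lam ≤ ENNReal.ofReal C * ENNReal.ofReal M := by
  have hC0 : 0 < C := by linarith
  have hC0' : ENNReal.ofReal C ≠ 0 := by simpa using hC0
  refine iSup₂_le fun vP m0 => sInf_le ⟨?_, ?_⟩
  · exact ENNReal.mul_pos hC0' (by simpa using hM)
  rw [modular_eq n q α hq1]
  have hpt : ∀ x, (Gfun n q α vP lam x / (ENNReal.ofReal C * ENNReal.ofReal M)) ^ q x ≤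
      (ENNReal.ofReal C)⁻¹ * Nfun n q α lam M vP x := by
    intro x
    have hq0 : 0 ≤ q x := by linarith [hq1 x]
    rw [← Gfun_div_rpow n q α lam M hM vP x (hq1 x), mul_comm (ENNReal.ofReal C), div_eq_mul_inv,
      ENNReal.mul_inv (Or.inr ENNReal.ofReal_ne_top) (Or.inl ENNReal.ofReal_ne_top), ← mul_assoc,
      ← div_eq_mul_inv (Gfun n q α vP lam x), ENNReal.mul_rpow_of_nonneg _ _ hq0, mul_comm]
    gcongr
    conv_rhs => rw [← ENNReal.rpow_one (ENNReal.ofReal C)⁻¹]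
    refine ENNReal.rpow_le_rpow_of_exponent_ge ?_ (hq1 x)
    rw [ENNReal.inv_le_one]
    simpa using ENNReal.ofReal_le_ofReal hC
  have hP0 := volume_cube_ne_zero n vP m0
  have hPt := volume_cube_ne_top n vP m0
  calc _ ≤ (volume (dyadicCube n vP m0))⁻¹ * ∫⁻ x in dyadicCube n vP m0,
        (ENNReal.ofReal C)⁻¹ * Nfun n q α lam M vP x := by gcongr with x; exact hpt x
    _ = (volume (dyadicCube n vP m0))⁻¹ * ((ENNReal.ofReal C)⁻¹ *
          ∫⁻ x in dyadicCube n vP m0, Nfun n q α lam M vP x) := by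
        rw [lintegral_const_mul' _ _ (ENNReal.inv_ne_top.2 hC0')]
    _ ≤ (volume (dyadicCube n vP m0))⁻¹ * ((ENNReal.ofReal C)⁻¹ *
          (ENNReal.ofReal C * volume (dyadicCube n vP m0))) := by gcongr; exact h vP m0
    _ = 1 := by
        rw [← mul_assoc (ENNReal.ofReal C)⁻¹, ENNReal.inv_mul_cancel hC0' ENNReal.ofReal_ne_top,
          one_mul, ENNReal.inv_mul_cancel hP0 hPt]

/-- for `α ∈ C_loc^log` and `q ∈ 𝒫^log` with `1 < q⁻ ≤ q⁺ < ∞`,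
`‖λ‖_{b̃^{α(·),q(·)}_{q(·),q(·)}} ≈ ‖ m^{α(·),q(·)}(λ) ‖_∞` for all
`λ ∈ b̃^{α(·),q(·)}_{q(·),q(·)}`. -/
theorem statement8 (n : ℕ) (hn : 1 ≤ n) (q α : Rn n → ℝ)
    (hqmeas : Measurable q) (hαmeas : Measurable α)
    (hα : ∃ c : ℝ, 0 < c ∧ LocLogHolderWith n c α)
    (hq1 : ∀ x, 1 ≤ q x)
    (hqlog : GlobLogHolder n fun x => 1 / q x)
    (qm qM : ℝ) (hqm : 1 < qm)
    (hq : ∀ᵐ x ∂(volume : Measure (Rn n)), qm ≤ q x ∧ q x ≤ qM) :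
    ∃ c₁ c₂ : ℝ, 0 < c₁ ∧ 0 < c₂ ∧
      ∀ lam : ℕ → (Fin n → ℤ) → ℂ, btNorm n q α lam < ⊤ →
        ENNReal.ofReal c₁ * btNorm n q α lam ≤
            essSup (mFun n q α lam) (volume : Measure (Rn n)) ∧
          essSup (mFun n q α lam) (volume : Measure (Rn n)) ≤
            ENNReal.ofReal c₂ * btNorm n q α lam := by
  obtain ⟨cα, hcα, hαlog⟩ := hα
  obtain ⟨⟨cq, hcq, hqloc⟩, -⟩ := hqlog
  have hqM : ∀ᵐ x ∂(volume : Measure (Rn n)), q x ≤ qM := hq.mono fun x hx => hx.2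
  have hqM1 : 1 ≤ qM := by
    obtain ⟨x, hx⟩ := hqM.exists
    exact (hq1 x).trans hx
  have hL : 0 ≤ Real.log n := Real.log_nonneg (by exact_mod_cast hn)
  set D := cα * (1 + Real.log n) with hD
  set B := qM * qM * (cq * (1 + Real.log n)) with hB
  have hD0 : 0 ≤ D := by positivity
  have hB0 : 0 ≤ B := by positivity
  set C := Real.exp (D * qM + B) * 4 with hC
  have hC1 : 1 ≤ C := by
    have : 1 ≤ Real.exp (D * qM + B) := Real.one_le_exp (by positivity)
    linarith
  have hC0 : 0 < C := by linarith
  have hBv : ∀ (v : ℕ) (m : Fin n → ℤ), ∀ x ∈ dyadicCube n v m, ∀ y ∈ dyadicCube n v m,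
      q x ≤ qM → q y ≤ qM → v * Real.log 2 * |q x - q y| ≤ B := by
    intro v m x hx y hy hqx hqy
    have h1 := logHolder_cube n hn cq hcq _ hqloc v m x y hx hy
    have hx0 : 0 < q x := by linarith [hq1 x]
    have hy0 : 0 < q y := by linarith [hq1 y]
    have h2 : |q x - q y| = q x * q y * |1 / q x - 1 / q y| := by
      have h3 : 1 / q x - 1 / q y = (q y - q x) / (q x * q y) := by field_simp
      rw [h3, abs_div, abs_of_pos (mul_pos hx0 hy0), mul_div_cancel₀ _ (mul_pos hx0 hy0).ne',
        abs_sub_comm]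
    calc v * Real.log 2 * |q x - q y|
        = q x * q y * (v * Real.log 2 * |1 / q x - 1 / q y|) := by rw [h2]; ring
      _ ≤ B := by rw [hB]; gcongr
  refine ⟨C⁻¹, 5, inv_pos.2 hC0, by norm_num, fun lam _ => ⟨?_, ?_⟩⟩
  · refine le_of_forall_gt fun t ht => ?_
    -- a real `M` strictly between the essential supremum and `t`
    obtain ⟨M', hM1, hM2⟩ := exists_between ht
    have hM't : M' ≠ ⊤ := (hM2.trans_le le_top).ne
    set M := M'.toReal with hMdef
    have hM : 0 < M := ENNReal.toReal_pos (zero_le.trans_lt hM1).ne' hM't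
    have hMM : ENNReal.ofReal M = M' := ENNReal.ofReal_toReal hM't
    have hmP : ∀ v m, mP n q α v m lam < ENNReal.ofReal M := fun v m =>
      (mP_le_essSup n q α lam v m).trans_lt (hMM ▸ hM1)
    have hfin := btNorm_le n q α hq1 lam M hM C hC1 fun vP m0 => by
      rw [hC, ENNReal.ofReal_mul (Real.exp_pos _).le, ENNReal.ofReal_ofNat]
      exact integral_Nfun_le n q α hqmeas hαmeas lam M _ (fun v m =>
        cube_estimate n q α hqmeas hαmeas hq1 qM D B hB0 hqM lam M hM v m
          (fun x hx y hy => logHolder_cube n hn cα hcα α hαlog v m x y hx hy) (hBv v m)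
          (hmP v m)) vP m0
    have hC0' : ENNReal.ofReal C ≠ 0 := by simpa using hC0
    refine lt_of_le_of_lt ?_ hM2
    calc ENNReal.ofReal C⁻¹ * btNorm n q α lam
        ≤ ENNReal.ofReal C⁻¹ * (ENNReal.ofReal C * ENNReal.ofReal M) := by gcongr
      _ = M' := by
        rw [ENNReal.ofReal_inv_of_pos hC0, ← mul_assoc,
          ENNReal.inv_mul_cancel hC0' ENNReal.ofReal_ne_top, one_mul, hMM]
  · rw [ENNReal.ofReal_ofNat]
    exact essSup_le_of_mP n q α lam _ (upper n q α hqmeas hαmeas hq1 lam)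

end
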